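/- arXiv:0906.2621 — 6 statements merged into one kernel-verified Lean document; each statement's English description precedes it below -/
import Mathlib

section
/- Let G be a group generated by three elements x, y, z satisfying x² = y³, y³ = z⁷ and z⁷ = x·y·z. Then G is perfect, i.e. G equals its commutator subgroup [G, G]. -/
/-!
For relations `x ^ p = y ^ q = z ^ r = x * y * z`, the images `a`, `b`, `c` of `x`, `y`, `z` in the
abelianization of `G`, written additively, satisfy `p a = q b = r c = a + b + c`. Multiplying
`p a = a + b + c` by `q r` eliminates `b` and `c` and leaves `d a = 0`, where
`d = p q r - q r - p r - p q`; by cyclic symmetry `d b = d c = 0` as well. The exponents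
`(2, 3, 7)` give `d = 42 - 41 = 1`.
-/

theorem zpow_eq_one_of_triangle_relations {A : Type*} [CommGroup A] {a b c : A} {p q r : ℤ}
    (hab : a ^ p = b ^ q) (hbc : b ^ q = c ^ r) (habc : c ^ r = a * b * c) :
    a ^ (p * q * r - q * r - p * r - p * q) = 1 := by
  have hb : b ^ (q * r) = a ^ (p * r) := by rw [zpow_mul, ← hab, zpow_mul]
  have hc : c ^ (q * r) = a ^ (p * q) := by
    rw [mul_comm q r, zpow_mul, ← hbc, ← hab, zpow_mul]
  have ha : a ^ (p * q * r) = a ^ (q * r) * a ^ (p * r) * a ^ (p * q) :=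
    calc a ^ (p * q * r) = (a * b * c) ^ (q * r) := by
          rw [mul_assoc p, zpow_mul, hab, hbc, habc]
      _ = a ^ (q * r) * a ^ (p * r) * a ^ (p * q) := by rw [mul_zpow, mul_zpow, hb, hc]
  rw [sub_sub, sub_sub, zpow_sub, zpow_add, zpow_add, ha, ← mul_assoc, mul_inv_cancel]

theorem eq_one_of_triangle_relations {A : Type*} [CommGroup A] {a b c : A} {p q r : ℤ}
    (hd : IsUnit (p * q * r - q * r - p * r - p * q))
    (hab : a ^ p = b ^ q) (hbc : b ^ q = c ^ r) (habc : c ^ r = a * b * c) :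
    a = 1 ∧ b = 1 ∧ c = 1 := by
  have eq_one_of_zpow {g : A} {n : ℤ} (hg : g ^ n = 1)
      (hn : n = p * q * r - q * r - p * r - p * q) : g = 1 := by
    rcases Int.isUnit_iff.mp (hn ▸ hd) with rfl | rfl <;> simpa using hg
  have hca : c ^ r = a ^ p := (hab.trans hbc).symm
  have hbca : a ^ p = b * c * a := by rw [← hca, habc, mul_assoc, mul_comm]
  have hcab : b ^ q = c * a * b := by rw [hbc, habc, mul_comm, mul_assoc]
  exact ⟨eq_one_of_zpow (zpow_eq_one_of_triangle_relations hab hbc habc) rfl,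
    eq_one_of_zpow (zpow_eq_one_of_triangle_relations hbc hca hbca) (by ring),
    eq_one_of_zpow (zpow_eq_one_of_triangle_relations hca hab hcab) (by ring)⟩

theorem commutator_eq_top_of_closure_eq_top {G : Type*} [Group G] {S : Set G}
    (hS : Subgroup.closure S = ⊤) (h : ∀ s ∈ S, Abelianization.of s = 1) :
    commutator G = ⊤ := by
  rw [eq_top_iff, ← hS, Subgroup.closure_le, ← Abelianization.ker_of]
  exact h

theorem bergman_perfect_general {G : Type*} [Group G] {x y z : G} {p q r : ℤ}
    (hd : IsUnit (p * q * r - q * r - p * r - p * q))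
    (hgen : Subgroup.closure ({x, y, z} : Set G) = ⊤)
    (hxy : x ^ p = y ^ q) (hyz : y ^ q = z ^ r) (hxyz : z ^ r = x * y * z) :
    commutator G = ⊤ := by
  have hab := congrArg Abelianization.of hxy
  have hbc := congrArg Abelianization.of hyz
  have habc := congrArg Abelianization.of hxyz
  simp only [map_zpow, map_mul] at hab hbc habc
  obtain ⟨hx, hy, hz⟩ := eq_one_of_triangle_relations hd hab hbc habc
  apply commutator_eq_top_of_closure_eq_top hgen
  rintro g (rfl | rfl | rfl)
  exacts [hx, hy, hz]

/-- If a group `G` is generated by `x, y, z` with `x² = y³ = z⁷ = x*y*z`,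
then `G` is perfect: `G = [G, G]`. -/
theorem bergman_perfect {G : Type*} [Group G] (x y z : G)
    (hgen : Subgroup.closure ({x, y, z} : Set G) = ⊤)
    (h1 : x ^ 2 = y ^ 3) (h2 : y ^ 3 = z ^ 7) (h3 : z ^ 7 = x * y * z) :
    commutator G = ⊤ :=
  bergman_perfect_general (p := 2) (q := 3) (r := 7) (by norm_num) hgen
    (mod_cast h1) (mod_cast h2) (mod_cast h3)
end

section
/- Let G be a group generated by three elements x, y, z satisfying x² = y³, y³ = z⁷ and z⁷ = x·y·z. If H is a subgroup of G which contains the center Z(G) and is isolated (i.e. for every g ∈ G and every positive integer n, gⁿ ∈ H implies g ∈ H), then H = G. Equivalently, G is the isolator of its center: G = I(Z(G)). -/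
/-!
A common power `c` of all the generators commutes with each of them, so it is central. An isolated
subgroup containing the center thus contains `c`, and with it every generator, as a root of `c`.
-/

section

open Subgroup

variable {G : Type*} [Group G] {S : Set G} {c : G} {H : Subgroup G}

lemma mem_center_of_forall_generator_pow_eq (hS : closure S = ⊤)
    (hc : ∀ s ∈ S, ∃ n : ℕ, s ^ n = c) : c ∈ center G := by
  rw [← centralizer_univ, ← coe_top, ← hS, centralizer_closure, mem_centralizer_iff]
  intro s hs
  obtain ⟨n, rfl⟩ := hc s hs
  exact Commute.self_pow s n

lemma closure_le_of_powSaturated (hH : H.PowSaturated) (hS : ∀ s ∈ S, ∃ n ≠ 0, s ^ n ∈ H) :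
    closure S ≤ H := by
  refine (closure_le H).mpr fun s hs ↦ ?_
  obtain ⟨n, hn, hsn⟩ := hS s hs
  exact (hH hsn).resolve_left hn

theorem bergman_isolator_of_center_general (hS : closure S = ⊤) (hc : ∀ s ∈ S, ∃ n ≠ 0, s ^ n = c)
    (hZ : center G ≤ H) (hH : H.PowSaturated) : H = ⊤ := by
  have hcH : c ∈ H :=
    hZ (mem_center_of_forall_generator_pow_eq hS fun s hs ↦ (hc s hs).imp fun _ ↦ And.right)
  have hroots : ∀ s ∈ S, ∃ n ≠ 0, s ^ n ∈ H := by
    intro s hs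
    obtain ⟨n, hn, rfl⟩ := hc s hs
    exact ⟨n, hn, hcH⟩
  exact top_le_iff.mp (hS ▸ closure_le_of_powSaturated hH hroots)

end

/-- If a group `G` is generated by `x, y, z` with `x² = y³ = z⁷ = x*y*z`,
then any isolated subgroup containing the center is all of `G`;
that is, `G` is the isolator of its center. -/
theorem bergman_isolator_of_center {G : Type*} [Group G] (x y z : G)
    (hgen : Subgroup.closure ({x, y, z} : Set G) = ⊤)
    (h1 : x ^ 2 = y ^ 3) (h2 : y ^ 3 = z ^ 7) (h3 : z ^ 7 = x * y * z)
    (H : Subgroup G) (hZ : Subgroup.center G ≤ H)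
    (hiso : ∀ (g : G) (n : ℕ), 0 < n → g ^ n ∈ H → g ∈ H) :
    H = ⊤ := by
  have hc : ∀ s ∈ ({x, y, z} : Set G), ∃ n ≠ 0, s ^ n = z ^ 7 := by
    rintro s (rfl | rfl | rfl)
    exacts [⟨2, two_ne_zero, h1.trans h2⟩, ⟨3, three_ne_zero, h2⟩, ⟨7, by decide, rfl⟩]
  exact bergman_isolator_of_center_general hgen hc hZ fun n g hg ↦
    n.eq_zero_or_pos.imp_right (hiso g n · hg)
end

section
/- Let G be a group generated by three elements x, y, z satisfying x² = y³, y³ = z⁷ and z⁷ = x·y·z, and let N be a proper normal subgroup of G which is isolated (for every g ∈ G and every positive integer n, gⁿ ∈ N implies g ∈ N). Then the center Z(G) is not contained in N, the quotient group G/N has non-trivial center, and G/N is non-abelian. -/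
/-!
The element `c = x * y * z` is a power of each generator. Hence it is central; and it is not in
`N`, since otherwise isolation would put all three generators in `N`. So the image of `c` is a
nontrivial central element of `G ⧸ N`. If the images of `x` and `y` commuted, raising
`c = x * y * z` to the power `p * q * r` would give `c ^ (p * q * r) = c ^ (q * r + p * r + p * q)`
in `G ⧸ N`. For `(p, q, r) = (2, 3, 7)` this reads `c ^ 42 = c ^ 41`, and in general `c` then has
finite order modulo `N`, so isolation again gives `c ∈ N`.
-/

theorem map_center_le_center {G H : Type*} [Group G] [Group H] {f : G →* H}
    (hf : Function.Surjective f) : (Subgroup.center G).map f ≤ Subgroup.center H := by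
  rintro _ ⟨c, hc, rfl⟩
  refine Subgroup.mem_center_iff.mpr (hf.forall.mpr fun g => ?_)
  rw [← map_mul, Subgroup.mem_center_iff.mp hc g, map_mul]

theorem center_le_of_center_quotient_eq_bot {G : Type*} [Group G] {N : Subgroup G} [N.Normal]
    (h : Subgroup.center (G ⧸ N) = ⊥) : Subgroup.center G ≤ N := by
  have hmap : (Subgroup.center G).map (QuotientGroup.mk' N) ≤ ⊥ :=
    h ▸ map_center_le_center (QuotientGroup.mk'_surjective N)
  rwa [le_bot_iff, Subgroup.map_eq_bot_iff, QuotientGroup.ker_mk'] at hmap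

/-- Isolated subgroups: those closed under taking roots. -/
def IsIsolatedSubgroup {G : Type*} [Group G] (N : Subgroup G) : Prop :=
  ∀ (g : G) (n : ℕ), 0 < n → g ^ n ∈ N → g ∈ N

theorem IsIsolatedSubgroup.mem_of_isOfFinOrder_mk {G : Type*} [Group G] {N : Subgroup G}
    [N.Normal] (hN : IsIsolatedSubgroup N) {g : G} (hg : IsOfFinOrder (g : G ⧸ N)) : g ∈ N := by
  obtain ⟨n, hn, hgn⟩ := hg.exists_pow_eq_one
  exact hN g n hn ((QuotientGroup.eq_one_iff _).mp hgn)

/-- The relations `x ^ p = y ^ q = z ^ r = x * y * z` of the centrally extended triangle group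
with parameters `(p, q, r)`; Bergman's relations are the case `(2, 3, 7)`. -/
structure IsTriangleTriple {M : Type*} [Monoid M] (p q r : ℕ) (x y z : M) : Prop where
  left_pow : x ^ p = x * y * z
  middle_pow : y ^ q = x * y * z
  right_pow : z ^ r = x * y * z

namespace IsTriangleTriple

theorem map {M M' : Type*} [Monoid M] [Monoid M'] {p q r : ℕ} {x y z : M}
    (h : IsTriangleTriple p q r x y z) (f : M →* M') :
    IsTriangleTriple p q r (f x) (f y) (f z) where
  left_pow := by simpa only [map_mul, map_pow] using congrArg f h.left_pow
  middle_pow := by simpa only [map_mul, map_pow] using congrArg f h.middle_pow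
  right_pow := by simpa only [map_mul, map_pow] using congrArg f h.right_pow

variable {G : Type*} [Group G] {p q r : ℕ} {x y z : G}

theorem mul_mem_center (h : IsTriangleTriple p q r x y z)
    (hgen : Subgroup.closure {x, y, z} = ⊤) : x * y * z ∈ Subgroup.center G := by
  simp only [Subgroup.center_eq_iInf hgen, Subgroup.mem_iInf,
    Subgroup.mem_centralizer_singleton_iff]
  rintro g (rfl | rfl | rfl)
  · rw [← h.left_pow, pow_mul_comm']
  · rw [← h.middle_pow, pow_mul_comm']
  · rw [← h.right_pow, pow_mul_comm']

theorem commute_mul_right (h : IsTriangleTriple p q r x y z) : Commute (x * y) z := by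
  have hxyz : Commute (x * y * z) z := h.right_pow ▸ Commute.pow_self z r
  simpa only [mul_inv_cancel_right] using hxyz.mul_left (Commute.refl z).inv_left

theorem mul_pow_eq_of_commute (h : IsTriangleTriple p q r x y z) (hxy : Commute x y) :
    (x * y * z) ^ (p * q * r) = (x * y * z) ^ (q * r + p * r + p * q) :=
  calc (x * y * z) ^ (p * q * r)
      = x ^ (p * q * r) * y ^ (p * q * r) * z ^ (p * q * r) := by
        rw [h.commute_mul_right.mul_pow, hxy.mul_pow]
    _ = (x ^ p) ^ (q * r) * (y ^ q) ^ (p * r) * (z ^ r) ^ (p * q) := by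
        rw [← pow_mul, ← pow_mul, ← pow_mul, mul_left_comm q p r, mul_comm r (p * q),
          mul_assoc p q r]
    _ = (x * y * z) ^ (q * r + p * r + p * q) := by
        rw [h.left_pow, h.middle_pow, h.right_pow, pow_add, pow_add]

theorem isOfFinOrder_mul_of_commute (h : IsTriangleTriple p q r x y z)
    (hpqr : q * r + p * r + p * q ≠ p * q * r) (hxy : Commute x y) :
    IsOfFinOrder (x * y * z) := by
  by_contra hinf
  exact hpqr (injective_pow_iff_not_isOfFinOrder.mpr hinf (h.mul_pow_eq_of_commute hxy).symm)

theorem mul_notMem_of_isIsolatedSubgroup (h : IsTriangleTriple p q r x y z)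
    (hgen : Subgroup.closure {x, y, z} = ⊤) (hp : 0 < p) (hq : 0 < q) (hr : 0 < r)
    {N : Subgroup G} (hN : N ≠ ⊤) (hiso : IsIsolatedSubgroup N) : x * y * z ∉ N := by
  intro hmem
  apply hN
  rw [eq_top_iff, ← hgen, Subgroup.closure_le]
  rintro g (rfl | rfl | rfl)
  · exact hiso g p hp (h.left_pow ▸ hmem)
  · exact hiso g q hq (h.middle_pow ▸ hmem)
  · exact hiso g r hr (h.right_pow ▸ hmem)

end IsTriangleTriple

-- The inequality `hpqr` excludes exactly the Euclidean triangles `1 / p + 1 / q + 1 / r = 1`.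
theorem bergman_quotient_properties_general {G : Type*} [Group G] {p q r : ℕ}
    (hp : 0 < p) (hq : 0 < q) (hr : 0 < r) (hpqr : q * r + p * r + p * q ≠ p * q * r)
    {x y z : G} (hgen : Subgroup.closure {x, y, z} = ⊤) (h : IsTriangleTriple p q r x y z)
    {N : Subgroup G} [N.Normal] (hN : N ≠ ⊤) (hiso : IsIsolatedSubgroup N) :
    ¬ Subgroup.center G ≤ N ∧ Subgroup.center (G ⧸ N) ≠ ⊥ ∧
      ∃ a b : G ⧸ N, a * b ≠ b * a := by
  have hmem : x * y * z ∉ N := h.mul_notMem_of_isIsolatedSubgroup hgen hp hq hr hN hiso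
  have hcenter : ¬ Subgroup.center G ≤ N := fun hle => hmem (hle (h.mul_mem_center hgen))
  refine ⟨hcenter, mt center_le_of_center_quotient_eq_bot hcenter, x, y, fun hxy => hmem ?_⟩
  exact hiso.mem_of_isOfFinOrder_mk
    ((h.map (QuotientGroup.mk' N)).isOfFinOrder_mul_of_commute hpqr hxy)

/-- If a group `G` is generated by `x, y, z` with `x² = y³ = z⁷ = x*y*z`,
and `N` is a proper isolated normal subgroup of `G`, then the center of `G`
is not contained in `N`, the quotient `G ⧸ N` has non-trivial center, and
`G ⧸ N` is non-abelian. -/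
theorem bergman_quotient_properties {G : Type*} [Group G] (x y z : G)
    (hgen : Subgroup.closure ({x, y, z} : Set G) = ⊤)
    (h1 : x ^ 2 = y ^ 3) (h2 : y ^ 3 = z ^ 7) (h3 : z ^ 7 = x * y * z)
    (N : Subgroup G) [N.Normal] (hN : N ≠ ⊤)
    (hiso : ∀ (g : G) (n : ℕ), 0 < n → g ^ n ∈ N → g ∈ N) :
    ¬ Subgroup.center G ≤ N ∧ Subgroup.center (G ⧸ N) ≠ ⊥ ∧
      ∃ a b : G ⧸ N, a * b ≠ b * a := by
  exact bergman_quotient_properties_general two_pos three_pos (by norm_num) (by norm_num) hgen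
    ⟨h1.trans (h2.trans h3), h2.trans h3, h3⟩ hN hiso
end

section
/- For every real number ξ, the set of real numbers η for which there exists an order-preserving additive group isomorphism between the ordered subgroups ℤ + ℤξ and ℤ + ℤη of (ℝ, +, ≤) is countable. -/
/-! A monotone homomorphism from a linearly ordered group to an archimedean group is determined by
its value at a single point, provided that value is nonzero (Hölder). Hence a countable ordered
group has only countably many monotone homomorphisms to `ℝ` whose range contains `1`, and `η` lies
in the range of one of them whenever `ℤ + ℤη` is order-isomorphic to the given group. -/

open scoped Pointwise in
theorem countable_addSubgroup_closure {A : Type*} [AddGroup A] {s : Set A}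
    (hs : s.Countable) : Countable (AddSubgroup.closure s) := by
  have hneg : (-s).Countable := Set.image_neg_eq_neg (s := s) ▸ hs.image _
  have : Countable ↥(s ∪ -s) := (hs.union hneg).to_subtype
  change Countable (AddSubgroup.closure s).toAddSubmonoid
  rw [AddSubgroup.closure_toAddSubmonoid, AddSubmonoid.closure_eq_mrange]
  exact (Set.countable_range (FreeAddMonoid.lift Subtype.val)).to_subtype

section Archimedean

variable {M : Type*} [AddCommGroup M] [LinearOrder M] [IsOrderedAddMonoid M] [Archimedean M]

theorem exists_nsmul_lt_zsmul_lt_nsmul {c x y : M} (hc : 0 < c) (hxy : x < y) :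
    ∃ (n : ℕ) (m : ℤ), n • x < m • c ∧ m • c < n • y := by
  obtain ⟨n, hn⟩ := exists_lt_nsmul (sub_pos.2 hxy) c
  obtain ⟨m, ⟨hm, hm'⟩, -⟩ := existsUnique_zsmul_near_of_pos hc (n • x)
  refine ⟨n, m + 1, hm', ?_⟩
  calc (m + 1) • c = m • c + c := add_one_zsmul c m
    _ < n • x + n • (y - x) := add_lt_add_of_le_of_lt hm hn
    _ = n • y := by rw [← nsmul_add, add_sub_cancel]

variable {G : Type*} [AddGroup G] [LinearOrder G]

theorem orderAddMonoidHom_le_of_apply_eq_of_pos {f g : G →+o M} {a : G} (h : f a = g a)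
    (ha : 0 < f a) : ⇑f ≤ g := by
  intro b
  by_contra! hlt
  obtain ⟨n, m, hg, hf⟩ := exists_nsmul_lt_zsmul_lt_nsmul ha hlt
  have hba : n • b < m • a := (OrderHomClass.mono g).reflect_lt (by simpa [← h] using hg)
  have hab : m • a < n • b := (OrderHomClass.mono f).reflect_lt (by simpa using hf)
  exact hba.asymm hab

theorem orderAddMonoidHom_eq_of_apply_eq_of_ne_zero {f g : G →+o M} {a : G} (h : f a = g a)
    (ha : f a ≠ 0) : f = g := by
  wlog hpos : 0 < f a generalizing a
  · exact this (a := -a) (by simp [h]) (by simpa using ha)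
      (by simpa using lt_of_le_of_ne (not_lt.1 hpos) ha)
  exact DFunLike.coe_injective <| le_antisymm (orderAddMonoidHom_le_of_apply_eq_of_pos h hpos)
    (orderAddMonoidHom_le_of_apply_eq_of_pos h.symm (h ▸ hpos))

theorem countable_setOf_orderAddMonoidHom_mem_range [Countable G] {c : M} (hc : c ≠ 0) :
    {f : G →+o M | c ∈ Set.range f}.Countable := by
  have hsub (a : G) : {f : G →+o M | f a = c}.Subsingleton := fun f hf g hg =>
    orderAddMonoidHom_eq_of_apply_eq_of_ne_zero (hf.trans hg.symm) (ne_of_eq_of_ne hf hc)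
  simpa only [Set.mem_range, Set.ofPred_exists] using
    Set.countable_iUnion fun a => (hsub a).countable

theorem countable_order_isomorphic_D_general [Countable G] {c : M} (hc : c ≠ 0) :
    {η : M | ∃ f : G →+o M, {c, η} ⊆ Set.range f}.Countable := by
  refine ((countable_setOf_orderAddMonoidHom_mem_range (G := G) hc).biUnion
    fun f _ => Set.countable_range f).mono ?_
  rintro η ⟨f, hf⟩
  obtain ⟨hcf, hηf⟩ := Set.pair_subset_iff.1 hf
  exact Set.mem_biUnion hcf hηf

end Archimedean

/-- For every real `ξ`, the set of reals `η` such that the ordered subgroups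
`ℤ + ℤξ` and `ℤ + ℤη` of `ℝ` are order-isomorphic as additive groups is
countable. -/
theorem countable_order_isomorphic_D (ξ : ℝ) :
    Set.Countable {η : ℝ |
      ∃ e : (AddSubgroup.closure ({1, ξ} : Set ℝ)) ≃+
            (AddSubgroup.closure ({1, η} : Set ℝ)),
        ∀ a b, a ≤ b ↔ e a ≤ e b} := by
  have := countable_addSubgroup_closure (Set.toFinite {1, ξ}).countable
  refine (countable_order_isomorphic_D_general (G := AddSubgroup.closure {1, ξ})
    one_ne_zero).mono ?_
  rintro η ⟨e, he⟩
  let f : AddSubgroup.closure {1, ξ} →+o ℝ :=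
    ⟨(AddSubgroup.closure {1, η}).subtype.comp e, fun a b hab => (he a b).1 hab⟩
  have hf : Set.range f = AddSubgroup.closure {1, η} :=
    (e.surjective.range_comp Subtype.val).trans Subtype.range_coe
  exact ⟨f, hf ▸ AddSubgroup.subset_closure⟩
end

section
/- There exists an uncountable set S of real numbers such that for all distinct ξ, η ∈ S, there is no order-preserving additive group isomorphism between the ordered subgroups ℤ + ℤξ and ℤ + ℤη of (ℝ, +, ≤). -/
/-!
An order isomorphism between subgroups of an archimedean ordered field preserves ratios: whether a
rational number lies below `x / y` is a comparison of integer multiples of `x` and `y`, and the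
isomorphism preserves such comparisons. An isomorphism `ℤ + ℤξ ≃ ℤ + ℤη` therefore exhibits
`ξ = ξ / 1` as a ratio of two elements of the countable group `ℤ + ℤη`. So each isomorphism class
contains only countably many `ξ`, and choosing one `ξ` from each class gives an uncountable set.
-/

section Ratio

variable {G K : Type*} [AddGroup G] [LinearOrder G] [Field K] [LinearOrder K]
  [IsStrictOrderedRing K] {f g : G →+ K} {y : G}

lemma ratCast_lt_map_div_map_iff (hf : StrictMono f) (hy : 0 < y) (x : G) (r : ℚ) :
    (r : K) < f x / f y ↔ r.num • y < r.den • x := by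
  have hfy : 0 < f y := by simpa using hf hy
  have hden : (0 : K) < r.den := mod_cast r.den_pos
  calc (r : K) < f x / f y ↔ r.num * f y < r.den * f x := by
        rw [Rat.cast_def, div_lt_div_iff₀ hden hfy, mul_comm (f x)]
    _ ↔ f (r.num • y) < f (r.den • x) := by simp
    _ ↔ r.num • y < r.den • x := hf.lt_iff_lt

variable [Archimedean K]

lemma map_div_map_eq_of_strictMono (hf : StrictMono f) (hg : StrictMono g) (hy : 0 < y) (x : G) :
    f x / f y = g x / g y :=
  eq_of_forall_rat_lt_iff_lt fun r ↦
    (ratCast_lt_map_div_map_iff hf hy x r).trans (ratCast_lt_map_div_map_iff hg hy x r).symm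

lemma coe_div_coe_eq_of_orderAddMonoidIso {H H' : AddSubgroup K} (e : H ≃+o H') {y : H}
    (hy : 0 < y) (x : H) : (x : K) / y = e x / e y :=
  map_div_map_eq_of_strictMono (f := H.subtype) (g := H'.subtype.comp (e : H →+ H'))
    (Subtype.strictMono_coe _) ((Subtype.strictMono_coe _).comp e.strictMono) hy x

end Ratio

lemma exists_not_countable_pairwise_not_rel {α : Type*} [Uncountable α] (s : Setoid α)
    (hs : ∀ a, {b | s b a}.Countable) :
    ∃ S : Set α, ¬ S.Countable ∧ S.Pairwise fun a b ↦ ¬ s a b := by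
  refine ⟨Set.range (Quotient.out : Quotient s → α), fun hS ↦ ?_, ?_⟩
  · have : Countable (Quotient s) :=
      (Equiv.ofInjective _ Quotient.out_injective).countable_iff.2 hS
    have hfiber (q : Quotient s) : (Quotient.mk s ⁻¹' {q}).Countable := by
      induction q using Quotient.inductionOn with
      | h a => exact (hs a).mono fun b hb ↦ Quotient.exact hb
    exact not_countable (Set.Countable.of_preimage_singleton hfiber)
  · rintro _ ⟨p, rfl⟩ _ ⟨q, rfl⟩ hne h
    exact hne (congrArg _ (Quotient.out_equiv_out.1 h))

/-- The paper's `D(ξ) = ℤ + ℤξ`, encoded as the additive subgroup generated by `1` and `ξ`. -/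
abbrev D {K : Type*} [Ring K] (ξ : K) : AddSubgroup K :=
  AddSubgroup.closure {1, ξ}

instance countable_D {K : Type*} [Ring K] (ξ : K) : Countable (D ξ) :=
  have : Module.Finite ℤ (D ξ) := Module.Finite.iff_addGroup_fg.2 (AddGroup.closure_finite_fg _)
  Finsupp.Countable.of_moduleFinite (R := ℤ)

section OrderIsoClasses

/-- The equivalence relation on `K` under which `ξ` and `η` are related when `D ξ` and `D η` are
isomorphic as ordered groups; its classes provide the representatives making up `S`. -/
def orderIsoSetoid (K : Type*) [Ring K] [Preorder K] : Setoid K where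
  r ξ η := Nonempty (D ξ ≃+o D η)
  iseqv :=
    { refl := fun _ ↦ ⟨.refl _⟩
      symm := fun ⟨e⟩ ↦ ⟨e.symm⟩
      trans := fun ⟨e⟩ ⟨e'⟩ ↦ ⟨e.trans e'⟩ }

variable {K : Type*} [Field K] [LinearOrder K] [IsStrictOrderedRing K] [Archimedean K]

lemma exists_div_eq_of_orderAddMonoidIso {ξ η : K} (e : D ξ ≃+o D η) :
    ∃ a b : D η, (a : K) / b = ξ := by
  let one : D ξ := ⟨1, AddSubgroup.mem_closure_of_mem (by simp)⟩
  let gen : D ξ := ⟨ξ, AddSubgroup.mem_closure_of_mem (by simp)⟩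
  have one_pos : 0 < one := Subtype.coe_lt_coe.1 zero_lt_one
  refine ⟨e gen, e one, ?_⟩
  calc (e gen : K) / e one = ξ / 1 := (coe_div_coe_eq_of_orderAddMonoidIso e one_pos gen).symm
    _ = ξ := div_one ξ

lemma countable_setOf_orderIsoSetoid (η : K) : {ξ | orderIsoSetoid K ξ η}.Countable := by
  refine (Set.countable_range fun p : D η × D η ↦ (p.1 : K) / p.2).mono ?_
  rintro ξ ⟨e⟩
  obtain ⟨a, b, hab⟩ := exists_div_eq_of_orderAddMonoidIso e
  exact ⟨(a, b), hab⟩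

variable (K) in
theorem uncountable_pairwise_nonisomorphic_D_general [Uncountable K] :
    ∃ S : Set K, ¬ S.Countable ∧ S.Pairwise fun ξ η ↦ ¬ Nonempty (D ξ ≃+o D η) :=
  exists_not_countable_pairwise_not_rel (orderIsoSetoid K) countable_setOf_orderIsoSetoid

end OrderIsoClasses

/-- There is an uncountable set `S` of reals such that for distinct
`ξ, η ∈ S` the ordered subgroups `ℤ + ℤξ` and `ℤ + ℤη` of `ℝ` are not
order-isomorphic as additive groups. -/
theorem uncountable_pairwise_nonisomorphic_D :
    ∃ S : Set ℝ, ¬ S.Countable ∧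
      ∀ ξ ∈ S, ∀ η ∈ S, ξ ≠ η →
        ¬ ∃ e : (AddSubgroup.closure ({1, ξ} : Set ℝ)) ≃+
                (AddSubgroup.closure ({1, η} : Set ℝ)),
            ∀ a b, a ≤ b ↔ e a ≤ e b := by
  obtain ⟨S, hS, hpairwise⟩ := uncountable_pairwise_nonisomorphic_D_general ℝ
  exact ⟨S, hS, fun ξ hξ η hη hne ⟨e, he⟩ ↦ hpairwise hξ hη hne ⟨⟨e, (he _ _).symm⟩⟩⟩
end

section
/- There is no countable right-ordered group U such that every countable right-ordered group admits an order-embedding into U. In other words, there is no universal countable right-ordered group. -/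
/-! The groups `D(ξ) = ℤ + ℤξ ⊆ ℝ` are all images of `ℤ × ℤ`, and `ξ` can be recovered from the
order that `D(ξ)` pulls back to `ℤ × ℤ`: for a rational `q = a / b` with `b > 0`, `ξ < q` means
`bξ < a`. An order-embedding of `D(ξ)` into `U` factors this pullback through a homomorphism
`ℤ × ℤ → U`, which therefore determines `ξ`. A countable `U` receives only countably many
homomorphisms from the finitely generated group `ℤ × ℤ`, but there are uncountably many `ξ`. -/

theorem countable_of_group_fg (G : Type*) [Group G] [Group.FG G] : Countable G := by
  obtain ⟨α, _, φ, hφ⟩ := Group.fg_iff_exists_freeGroup_hom_surjective_finite.1 ‹Group.FG G›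
  exact hφ.countable

theorem countable_monoidHom_of_fg (M N : Type*) [Monoid M] [Monoid.FG M] [MulOneClass N]
    [Countable N] : Countable (M →* N) := by
  obtain ⟨S, hS, hfin⟩ := Monoid.fg_iff.1 ‹Monoid.FG M›
  have : Finite S := hfin
  have restrict_injective : Function.Injective fun (f : M →* N) (s : S) => f s := fun f g hfg =>
    MonoidHom.eq_of_eqOn_denseM hS fun s hs => congrFun hfg ⟨s, hs⟩
  exact restrict_injective.countable

section IntAddIntMul

/-- The homomorphism `(m, n) ↦ m + n ξ`, presenting `ℤ + ℤξ` as a quotient of `ℤ × ℤ`. -/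
def intAddIntMulHom {R : Type*} [Ring R] (ξ : R) : ℤ × ℤ →+ R :=
  (zmultiplesHom R 1).coprod (zmultiplesHom R ξ)

/-- The additive group `D(ξ) = ℤ + ℤξ`. It carries the order of the ambient ring, and
`Multiplicative (intAddIntMul ξ)` is the same ordered group written multiplicatively. -/
def intAddIntMul {R : Type*} [Ring R] (ξ : R) : AddSubgroup R :=
  (intAddIntMulHom ξ).range

theorem intAddIntMulHom_apply {R : Type*} [Ring R] (ξ : R) (a : ℤ × ℤ) :
    intAddIntMulHom ξ a = a.1 + a.2 * ξ := by
  simp [intAddIntMulHom]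

instance addGroup_fg_intAddIntMul {R : Type*} [Ring R] (ξ : R) : AddGroup.FG (intAddIntMul ξ) :=
  AddGroup.fg_range (intAddIntMulHom ξ)

variable {K : Type*} [Field K] [LinearOrder K] [IsStrictOrderedRing K]

theorem intAddIntMulHom_den_lt_num_iff (ξ : K) (q : ℚ) :
    intAddIntMulHom ξ (0, q.den) < intAddIntMulHom ξ (q.num, 0) ↔ ξ < q := by
  have hden : (0 : K) < q.den := mod_cast q.den_pos
  simp [intAddIntMulHom_apply, Rat.cast_def, lt_div_iff₀' hden]

theorem eq_of_forall_intAddIntMulHom_lt_iff [Archimedean K] {ξ η : K}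
    (h : ∀ a b, intAddIntMulHom ξ a < intAddIntMulHom ξ b ↔
      intAddIntMulHom η a < intAddIntMulHom η b) : ξ = η :=
  eq_of_forall_lt_rat_iff_lt fun q => by
    rw [← intAddIntMulHom_den_lt_num_iff, h, intAddIntMulHom_den_lt_num_iff]

theorem countable_setOf_intAddIntMul_embeds [Archimedean K] (U : Type*) [Monoid U] [Preorder U]
    [Countable U] :
    {ξ : K | ∃ f : Multiplicative (intAddIntMul ξ) →* U, StrictMono f}.Countable := by
  set s := {ξ : K | ∃ f : Multiplicative (intAddIntMul ξ) →* U, StrictMono f}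
  choose f hf using fun ξ : s => ξ.2
  let F (ξ : s) : Multiplicative (ℤ × ℤ) →* U :=
    (f ξ).comp (intAddIntMulHom ξ.1).rangeRestrict.toMultiplicative
  have F_lt_iff (ξ : s) (a b : ℤ × ℤ) : F ξ (.ofAdd a) < F ξ (.ofAdd b) ↔
      intAddIntMulHom ξ.1 a < intAddIntMulHom ξ.1 b := (hf ξ).lt_iff_lt
  have F_injective : Function.Injective F := fun ξ η hF =>
    Subtype.ext <| eq_of_forall_intAddIntMulHom_lt_iff fun a b => by
      rw [← F_lt_iff, hF, F_lt_iff]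
  have := countable_monoidHom_of_fg (Multiplicative (ℤ × ℤ)) U
  exact F_injective.countable

end IntAddIntMul

theorem no_universal_countable_right_ordered_group_general
    (U : Type*) [Monoid U] [Preorder U] [Countable U] :
    ¬ ∀ (G : Type) [CommGroup G] [LinearOrder G] [IsOrderedMonoid G] [MulArchimedean G]
        [Group.FG G], ∃ f : G →* U, StrictMono f := by
  intro h
  refine Set.not_countable_univ (α := ℝ) ?_
  exact (countable_setOf_intAddIntMul_embeds U).mono fun ξ _ => h (Multiplicative (intAddIntMul ξ))

/-- There is no universal countable right-ordered group: no countable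
right-ordered group `U` admits an order-embedding of every countable
right-ordered group. -/
theorem no_universal_countable_right_ordered_group
    (U : Type) [Group U] [LinearOrder U]
    (hU : ∀ a b c : U, a ≤ b → a * c ≤ b * c) (hUc : Countable U) :
    ¬ (∀ (G : Type) [Group G] [LinearOrder G],
        (∀ a b c : G, a ≤ b → a * c ≤ b * c) → Countable G →
        ∃ f : G →* U, Function.Injective f ∧ StrictMono f) := by
  refine fun h => no_universal_countable_right_ordered_group_general U fun G _ _ _ _ _ => ?_
  exact (h G (fun _ _ c hab => mul_le_mul_left hab c) (countable_of_group_fg G)).imp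
    fun _ => And.right
end
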